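/- Let k be a rational number and let n ≥ 1 be an integer. Define F(n,k) = (10n² + 12nk + 4k² + 6n + 4k + 1) · (1/2)_n (1/2 + k)_n⁴ / (1)_n⁵ · (−1)ⁿ 4ⁿ and G(n,k) = (n + 2k − 1) · (1/2)_n (1/2 + k)_{n-1}⁴ / (1)_{n-1}⁵ · (−1)ⁿ 2^{2n+1}, where (a)_m = a(a+1)···(a+m−1) denotes the Pochhammer symbol over ℚ (with (a)_0 = 1). Then F(n, k−1) − F(n, k) = G(n+1, k) − G(n, k). -/

import Mathlib

/-!
Write `n = m + 1`. Every Pochhammer symbol in the relation is a polynomial multiple of one of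
`(1/2)_{m+1}`, `(1/2 + k)_m`, `(1)_m`: shifting `n` appends a last factor, and shifting `k` by `-1`
prepends the first factor, since `(k - 1/2)_{m+1} = (k - 1/2) (k + 1/2)_m`
(`ascPochhammer_eval_succ_left`). Pulling out the common factor
`(1/2)_{m+1} (1/2 + k)_m⁴ / (1)_m⁵ · (-1)ⁿ 4ⁿ` leaves an identity of rational functions of `m` and
`k`, whose only denominator is a power of `m + 1`. The
denominators `(1)_m` and `m + 1` never vanish, and nothing is divided by `(1/2 + k)_m`, which may.
-/

/-- `F(n,k) = (10n² + 12nk + 4k² + 6n + 4k + 1) · (1/2)_n (1/2 + k)_n⁴ / (1)_n⁵ · (−1)ⁿ 4ⁿ`. -/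
noncomputable def wzF2 (n : ℕ) (k : ℚ) : ℚ :=
  (10 * n ^ 2 + 12 * n * k + 4 * k ^ 2 + 6 * n + 4 * k + 1) *
    ((ascPochhammer ℚ n).eval (1 / 2) * ((ascPochhammer ℚ n).eval (1 / 2 + k)) ^ 4
      / ((ascPochhammer ℚ n).eval 1) ^ 5) * (-1) ^ n * 4 ^ n

/-- `G(n,k) = (n + 2k − 1) · (1/2)_n (1/2 + k)_{n-1}⁴ / (1)_{n-1}⁵ · (−1)ⁿ 2^{2n+1}`. -/
noncomputable def wzG2 (n : ℕ) (k : ℚ) : ℚ :=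
  (n + 2 * k - 1) *
    ((ascPochhammer ℚ n).eval (1 / 2) * ((ascPochhammer ℚ (n - 1)).eval (1 / 2 + k)) ^ 4
      / ((ascPochhammer ℚ (n - 1)).eval 1) ^ 5) * (-1) ^ n * 2 ^ (2 * n + 1)

/-- Splitting off the first factor: `(x)_{m+1} = x (x + 1)_m`. -/
lemma ascPochhammer_eval_succ_left (m : ℕ) (x : ℚ) :
    (ascPochhammer ℚ (m + 1)).eval x = x * (ascPochhammer ℚ m).eval (x + 1) := by
  simp [ascPochhammer_succ_left, Polynomial.eval_comp]

theorem wz_pair_relation_J2 (k : ℚ) (n : ℕ) (hn : 1 ≤ n) :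
    wzF2 n (k - 1) - wzF2 n k = wzG2 (n + 1) k - wzG2 n k := by
  obtain ⟨m, rfl⟩ : ∃ m, n = m + 1 := ⟨n - 1, by omega⟩
  have hA : (ascPochhammer ℚ (m + 1)).eval (1 / 2 + (k - 1))
      = (k - 1 / 2) * (ascPochhammer ℚ m).eval (1 / 2 + k) := by
    rw [ascPochhammer_eval_succ_left, show (1 / 2 + (k - 1) + 1 : ℚ) = 1 / 2 + k by ring]
    ring
  have hQ : (ascPochhammer ℚ m).eval 1 ≠ 0 := (ascPochhammer_pos m 1 one_pos).ne'
  have hm : (m : ℚ) + 1 ≠ 0 := by positivity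
  have h4 : (2 : ℚ) ^ (2 * (m + 1) + 1) = 2 * 4 ^ (m + 1) := by
    rw [pow_succ, pow_mul]; norm_num; ring
  have h4' : (2 : ℚ) ^ (2 * (m + 1 + 1) + 1) = 8 * 4 ^ (m + 1) := by
    rw [pow_succ, pow_mul, pow_succ (2 ^ 2 : ℚ)]; norm_num; ring
  simp only [wzF2, wzG2, Nat.add_sub_cancel, h4, h4', hA]
  -- `(1/2)_{m+1}` is kept whole; only `(1/2)_{m+2}` is expanded.
  rw [ascPochhammer_succ_eval (m + 1) (1 / 2 : ℚ), ascPochhammer_succ_eval m (1 / 2 + k),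
    ascPochhammer_succ_eval m (1 : ℚ), pow_succ (-1 : ℚ) (m + 1)]
  generalize (ascPochhammer ℚ (m + 1)).eval (1 / 2 : ℚ) = P
  generalize (ascPochhammer ℚ m).eval (1 / 2 + k) = A
  generalize (ascPochhammer ℚ m).eval (1 : ℚ) = Q at hQ ⊢
  generalize (-1 : ℚ) ^ (m + 1) = s
  generalize (4 : ℚ) ^ (m + 1) = t
  push_cast
  rw [add_comm (1 : ℚ) (m : ℚ)]
  field_simp
  ring
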